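/- For any ᾱ, β̄ ∈ (1, ∞) set R̄_Z² = ᾱ m M_x² / (λ_min⁺(W_x))² and R̄_S² = β̄ m M_y² / (λ_min⁺(W_y))². Then the consensus-constrained saddle value equals the value of the reformulation with bounded Lagrange multipliers: min over x ∈ X with 𝐖_x x = 0 and p ∈ P of the max over y ∈ Y with 𝐖_y y = 0 and q ∈ Q of F(x,p,y,q) equals min over (x,p,s) ∈ X × P × {s ∈ ℝ^{m d_y} : ‖s‖₂ ≤ R̄_S} of the max over (y,q,z) ∈ Y × Q × {z ∈ ℝ^{m d_x} : ‖z‖₂ ≤ R̄_Z} of F(x,p,y,q) + ⟨z, 𝐖_x x⟩ + ⟨s, 𝐖_y y⟩. -/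

import Mathlib

/-!
The proof is an exact-penalty argument combined with a single use of Sion's minimax theorem.

Let `c` be the mean of the blocks `x_i`. Expanding in an eigenbasis of `W` gives
`λ_min⁺ ‖x - (c, …, c)‖ ≤ ‖𝐖 x‖` (`eig_bound_vec`), and a sum of `m` functions with gradients
bounded by `M` is `√m M`-Lipschitz in the stacked variable. Hence replacing `x` by its mean changes
such a sum by at most `R ‖𝐖 x‖` (`exact_penalty`), for `R` the radius of the multiplier ball.
The penalty `R ‖𝐖 x‖` is the maximum of `⟨z, 𝐖 x⟩` over that ball (`exists_dual`).

* Consensus value `≤` reformulated value: given `(x, p, s)`, average `x`. Against any consensus `y`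
  the term in `s` vanishes, and the dual vector `z` of `𝐖_x x` pays for the averaging.
* Reformulated value `≤` consensus value: for fixed consensus `x` and `p`, a saddle point of
  `(s, (y, q)) ↦ F + ⟨s, 𝐖_y y⟩` provides a multiplier `s` for which the maximum over all `(y, q)`
  is attained, up to the exact penalty, at a consensus point (`exists_multiplier`).
-/

open RealInnerProductSpace

/-- On the orthogonal complement of the kernel `span(𝟙)`, the matrix expands norms by at least its
smallest positive eigenvalue: each coordinate in an orthonormal eigenbasis is either zero or is
multiplied by an eigenvalue `≥ l`. -/
lemma eig_bound {m : ℕ} {W : Matrix (Fin m) (Fin m) ℝ} (hW : W.PosSemidef)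
    (hker : ∀ v : Fin m → ℝ, W.mulVec v = 0 ↔ ∀ i j, v i = v j) {l : ℝ}
    (hl : IsLeast {μ : ℝ | 0 < μ ∧ ∃ v : Fin m → ℝ, v ≠ 0 ∧ W.mulVec v = μ • v} l)
    (v : Fin m → ℝ) (hv : ∑ i, v i = 0) :
    l ^ 2 * ∑ i, v i ^ 2 ≤ ∑ i, (W.mulVec v i) ^ 2 := by
  have hH := hW.isHermitian
  have key : ∀ w : Fin m → ℝ,
      ∑ i, w i ^ 2 = ∑ j, ((hH.eigenvectorBasis j : Fin m → ℝ) ⬝ᵥ w) ^ 2 := by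
    intro w
    have h := hH.eigenvectorBasis.sum_sq_norm_inner_right (WithLp.toLp 2 w)
    rw [EuclideanSpace.norm_sq_eq] at h
    simp only [Real.norm_eq_abs, sq_abs] at h
    rw [← h]
    refine Finset.sum_congr rfl fun j _ => ?_
    simp [PiLp.inner_apply, dotProduct, mul_comm]
  rw [key v, key (W.mulVec v), Finset.mul_sum]
  refine Finset.sum_le_sum fun j _ => ?_
  have hb := hH.mulVec_eigenvectorBasis j
  set b : Fin m → ℝ := ⇑(hH.eigenvectorBasis j) with hbdef
  have hbne : b ≠ 0 := by
    intro h0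
    apply hH.eigenvectorBasis.orthonormal.ne_zero j
    ext i
    exact congrFun h0 i
  -- symmetry of `W` moves it onto the eigenvector
  have hswap : b ⬝ᵥ W.mulVec v = hH.eigenvalues j * (b ⬝ᵥ v) := by
    rw [Matrix.dotProduct_mulVec, ← Matrix.mulVec_transpose]
    have : W.transpose = W := by
      have := hH.eq
      rwa [Matrix.conjTranspose_eq_transpose_of_trivial] at this
    rw [this, hb, smul_dotProduct, smul_eq_mul]
  rw [hswap, mul_pow]
  rcases (hW.eigenvalues_nonneg j).eq_or_lt with h0 | hpos
  · rw [← h0, zero_smul] at hb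
    have hc := (hker b).1 hb
    have : b ⬝ᵥ v = 0 := by
      rcases m with _ | m
      · simp [dotProduct]
      · have : b ⬝ᵥ v = ∑ i, b 0 * v i := Finset.sum_congr rfl fun i _ => by rw [hc i 0]
        rw [this, ← Finset.mul_sum, hv, mul_zero]
    rw [this]; simp
  · have hle : l ≤ hH.eigenvalues j := hl.2 ⟨hpos, b, hbne, hb⟩
    have := hl.1.1
    gcongr

/-- Blockwise form of `eig_bound`, applied to each coordinate of `x` minus its mean. -/
lemma eig_bound_vec {m d : ℕ} (hm : 0 < m) {W : Matrix (Fin m) (Fin m) ℝ} (hW : W.PosSemidef)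
    (hker : ∀ v : Fin m → ℝ, W.mulVec v = 0 ↔ ∀ i j, v i = v j) {l : ℝ}
    (hl : IsLeast {μ : ℝ | 0 < μ ∧ ∃ v : Fin m → ℝ, v ≠ 0 ∧ W.mulVec v = μ • v} l)
    (x : Fin m → EuclideanSpace ℝ (Fin d)) :
    l ^ 2 * ∑ i, ‖x i - ∑ j, (m : ℝ)⁻¹ • x j‖ ^ 2 ≤ ∑ i, ‖∑ j, W i j • x j‖ ^ 2 := by
  simp only [EuclideanSpace.norm_sq_eq, Real.norm_eq_abs, sq_abs]
  rw [Finset.sum_comm, Finset.sum_comm (s := (Finset.univ : Finset (Fin m))) , Finset.mul_sum]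
  refine Finset.sum_le_sum fun k _ => ?_
  have hm' : (m : ℝ) ≠ 0 := by positivity
  have h := eig_bound hW hker hl (fun i => x i k - ∑ j, (m : ℝ)⁻¹ * x j k) (by
    rw [Finset.sum_sub_distrib, Finset.sum_const, ← Finset.mul_sum]
    simp [hm'])
  have hsub : W.mulVec (fun i => x i k - ∑ j, (m : ℝ)⁻¹ * x j k) = W.mulVec (fun i => x i k) := by
    have := (hker (fun _ => ∑ j, (m : ℝ)⁻¹ * x j k)).2 fun _ _ => rfl
    rw [← sub_zero (W.mulVec fun i => x i k), ← this, ← Matrix.mulVec_sub]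
    rfl
  rw [hsub] at h
  simpa [Matrix.mulVec, dotProduct] using h

lemma mul_sum_zero {m d : ℕ} {W : Matrix (Fin m) (Fin m) ℝ}
    (hker : ∀ v : Fin m → ℝ, W.mulVec v = 0 ↔ ∀ i j, v i = v j) (c : EuclideanSpace ℝ (Fin d)) :
    (fun i => ∑ j, W i j • (fun _ => c : Fin m → EuclideanSpace ℝ (Fin d)) j) = 0 := by
  funext i
  have h := congrFun ((hker fun _ => 1).2 fun _ _ => rfl) i
  simp only [Matrix.mulVec, dotProduct, mul_one, Pi.zero_apply] at h
  simp [← Finset.sum_smul, h]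

lemma mean_mem {m d : ℕ} (hm : 0 < m) {S : Set (EuclideanSpace ℝ (Fin d))} (hS : Convex ℝ S)
    {x : Fin m → EuclideanSpace ℝ (Fin d)} (hx : ∀ i, x i ∈ S) : ∑ j, (m : ℝ)⁻¹ • x j ∈ S := by
  have hm' : (m : ℝ) ≠ 0 := by positivity
  exact hS.sum_mem (fun _ _ => by positivity) (by simp [hm']) fun i _ => hx i

/-- Averaging the blocks of `x` changes a separable sum with gradients bounded by `M` by no more
than the penalty `R ‖𝐖 x‖`. -/
lemma exact_penalty {m d : ℕ} (hm : 0 < m) {W : Matrix (Fin m) (Fin m) ℝ} (hW : W.PosSemidef)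
    (hker : ∀ v : Fin m → ℝ, W.mulVec v = 0 ↔ ∀ i j, v i = v j) {l : ℝ}
    (hl : IsLeast {μ : ℝ | 0 < μ ∧ ∃ v : Fin m → ℝ, v ≠ 0 ∧ W.mulVec v = μ • v} l)
    {S : Set (EuclideanSpace ℝ (Fin d))} (hS : Convex ℝ S)
    (g : Fin m → EuclideanSpace ℝ (Fin d) → ℝ) (hg : ∀ i, Differentiable ℝ (g i)) {M : ℝ}
    (hM : 0 < M) (hgrad : ∀ i, ∀ x ∈ S, ‖gradient (g i) x‖ ≤ M) {a R : ℝ} (ha : 1 < a)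
    (hR0 : 0 ≤ R) (hR : R ^ 2 = a * m * M ^ 2 / l ^ 2)
    (x : Fin m → EuclideanSpace ℝ (Fin d)) (hx : ∀ i, x i ∈ S) :
    |∑ i, g i (x i) - ∑ i, g i (∑ j, (m : ℝ)⁻¹ • x j)| ≤
      R * √(∑ i, ‖∑ j, W i j • x j‖ ^ 2) := by
  have hc := mean_mem hm hS hx
  have hvec := eig_bound_vec hm hW hker hl x
  set c := ∑ j, (m : ℝ)⁻¹ • x j
  have hlip : ∀ i, |g i (x i) - g i c| ≤ M * ‖x i - c‖ := fun i =>
    hS.norm_image_sub_le_of_norm_fderiv_le (fun y _ => hg i y)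
      (fun y hy => by simpa [gradient] using hgrad i y hy) hc (hx i)
  have h1 : |∑ i, g i (x i) - ∑ i, g i c| ≤ M * ∑ i, ‖x i - c‖ := by
    rw [← Finset.sum_sub_distrib, Finset.mul_sum]
    exact (Finset.abs_sum_le_sum_abs _ _).trans (Finset.sum_le_sum fun i _ => hlip i)
  have h2 : (∑ i, ‖x i - c‖) ^ 2 ≤ m * ∑ i, ‖x i - c‖ ^ 2 := by
    simpa using sq_sum_le_card_mul_sum_sq (s := (Finset.univ : Finset (Fin m)))
      (f := fun i => ‖x i - c‖)
  refine h1.trans (abs_le_of_sq_le_sq' ?_ (by positivity)).2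
  have hl0 := hl.1.1
  rw [mul_pow, mul_pow, Real.sq_sqrt (by positivity), hR]
  calc M ^ 2 * (∑ i, ‖x i - c‖) ^ 2 ≤ M ^ 2 * (m * ∑ i, ‖x i - c‖ ^ 2) := by gcongr
    _ = 1 * m * M ^ 2 / l ^ 2 * (l ^ 2 * ∑ i, ‖x i - c‖ ^ 2) := by field_simp
    _ ≤ _ := by gcongr

/-- The Euclidean ball of radius `R` contains a vector attaining equality in Cauchy–Schwarz with `w`. -/
lemma exists_dual {m d : ℕ} {R : ℝ} (hR : 0 ≤ R) (w : Fin m → EuclideanSpace ℝ (Fin d)) :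
    ∃ z : Fin m → EuclideanSpace ℝ (Fin d), √(∑ i, ‖z i‖ ^ 2) ≤ R ∧
      ∑ i, ⟪z i, w i⟫ = R * √(∑ i, ‖w i‖ ^ 2) := by
  set n := √(∑ i, ‖w i‖ ^ 2) with hn
  have hsq : ∑ i, ‖w i‖ ^ 2 = n ^ 2 := (Real.sq_sqrt (by positivity)).symm
  rcases (Real.sqrt_nonneg _ : 0 ≤ n).eq_or_lt with h0 | hpos
  · exact ⟨0, by simpa using hR, by simp [hn, ← h0]⟩
  · refine ⟨fun i => (R / n) • w i, le_of_eq ?_, ?_⟩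
    · simp only [norm_smul, mul_pow, ← Finset.mul_sum, hsq]
      rw [Real.norm_eq_abs, sq_abs, ← mul_pow, div_mul_cancel₀ _ hpos.ne', Real.sqrt_sq hR]
    · simp only [real_inner_smul_left, real_inner_self_eq_norm_sq, ← Finset.mul_sum, hsq]
      field_simp

/-- The Euclidean ball of stacked vectors, inside the product space `Fin m → _` whose own norm is
the sup norm, is nonempty, convex and compact. -/
lemma ball_props {m d : ℕ} (R : ℝ) (hR : 0 ≤ R) :
    {s : Fin m → EuclideanSpace ℝ (Fin d) | √(∑ i, ‖s i‖ ^ 2) ≤ R}.Nonempty ∧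
    Convex ℝ {s : Fin m → EuclideanSpace ℝ (Fin d) | √(∑ i, ‖s i‖ ^ 2) ≤ R} ∧
    IsCompact {s : Fin m → EuclideanSpace ℝ (Fin d) | √(∑ i, ‖s i‖ ^ 2) ≤ R} := by
  refine ⟨⟨0, by simpa using hR⟩, ?_, ?_⟩
  · have : {s : Fin m → EuclideanSpace ℝ (Fin d) | √(∑ i, ‖s i‖ ^ 2) ≤ R} =
        (WithLp.linearEquiv 2 ℝ (Fin m → EuclideanSpace ℝ (Fin d))).symm ⁻¹'
          Metric.closedBall 0 R := by
      ext s
      simp [PiLp.norm_eq_of_L2]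
    rw [this]
    exact (convex_closedBall _ _).linear_preimage
      (WithLp.linearEquiv 2 ℝ (Fin m → EuclideanSpace ℝ (Fin d))).symm.toLinearMap
  · refine Metric.isCompact_of_isClosed_isBounded (isClosed_le (by fun_prop) continuous_const) ?_
    refine (Metric.isBounded_closedBall (x := 0) (r := R)).subset fun s hs => ?_
    rw [mem_closedBall_zero_iff, pi_norm_le_iff_of_nonneg hR]
    intro i
    refine le_trans (Real.le_sqrt_of_sq_le ?_) hs
    exact Finset.single_le_sum (f := fun i => ‖s i‖ ^ 2) (fun _ _ => by positivity)
      (Finset.mem_univ i)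

/-- A bounded multiplier `s` relaxes the consensus constraint on `y` without increasing the
maximum: the relaxed objective is everywhere at most the value at some consensus point `(c, q₀)`.
The multiplier is the first component of a saddle point of the Lagrangian. -/
lemma exists_multiplier {m dy dq : ℕ} (hm : 0 < m)
    {W : Matrix (Fin m) (Fin m) ℝ} (hW : W.PosSemidef)
    (hker : ∀ v : Fin m → ℝ, W.mulVec v = 0 ↔ ∀ i j, v i = v j) {l : ℝ}
    (hl : IsLeast {μ : ℝ | 0 < μ ∧ ∃ v : Fin m → ℝ, v ≠ 0 ∧ W.mulVec v = μ • v} l)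
    {Yb : Set (EuclideanSpace ℝ (Fin dy))} {Qc : Fin m → Set (EuclideanSpace ℝ (Fin dq))}
    (hYb : Yb.Nonempty ∧ Convex ℝ Yb ∧ IsCompact Yb)
    (hQc : ∀ i, (Qc i).Nonempty ∧ Convex ℝ (Qc i) ∧ IsCompact (Qc i))
    (g : Fin m → EuclideanSpace ℝ (Fin dy) → EuclideanSpace ℝ (Fin dq) → ℝ)
    (hg : ∀ i, Differentiable ℝ
      (fun t : EuclideanSpace ℝ (Fin dy) × EuclideanSpace ℝ (Fin dq) => g i t.1 t.2))
    (hconc : ∀ i, ConcaveOn ℝ (Yb ×ˢ Qc i)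
      (fun t : EuclideanSpace ℝ (Fin dy) × EuclideanSpace ℝ (Fin dq) => g i t.1 t.2)) {M : ℝ}
    (hM : 0 < M) (hgrad : ∀ i, ∀ y ∈ Yb, ∀ q ∈ Qc i, ‖gradient (fun y' => g i y' q) y‖ ≤ M)
    {a R : ℝ} (ha : 1 < a) (hR0 : 0 ≤ R) (hR : R ^ 2 = a * m * M ^ 2 / l ^ 2) :
    ∃ s : Fin m → EuclideanSpace ℝ (Fin dy), √(∑ i, ‖s i‖ ^ 2) ≤ R ∧
      ∃ c ∈ Yb, ∃ q₀ : Fin m → EuclideanSpace ℝ (Fin dq), (∀ i, q₀ i ∈ Qc i) ∧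
        ∀ (y : Fin m → EuclideanSpace ℝ (Fin dy)) (q : Fin m → EuclideanSpace ℝ (Fin dq)),
          (∀ i, y i ∈ Yb) → (∀ i, q i ∈ Qc i) →
          ∑ i, g i (y i) (q i) + ∑ i, ⟪s i, ∑ j, W i j • y j⟫ ≤ ∑ i, g i c (q₀ i) := by
  obtain ⟨hBne, hBconv, hBcomp⟩ := ball_props (m := m) (d := dy) R hR0
  have hcont : ∀ i, Continuous
      (fun t : EuclideanSpace ℝ (Fin dy) × EuclideanSpace ℝ (Fin dq) => g i t.1 t.2) :=
    fun i => (hg i).continuous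
  have hLcont : Continuous (fun t : (Fin m → EuclideanSpace ℝ (Fin dy)) ×
      ((Fin m → EuclideanSpace ℝ (Fin dy)) × (Fin m → EuclideanSpace ℝ (Fin dq))) =>
      ∑ i, g i (t.2.1 i) (t.2.2 i) + ∑ i, ⟪t.1 i, ∑ j, W i j • t.2.1 j⟫) := by
    refine Continuous.add (continuous_finsetSum _ fun i _ => ?_) (by fun_prop)
    exact (hcont i).comp (by fun_prop : Continuous (fun t : (Fin m → EuclideanSpace ℝ (Fin dy)) ×
      ((Fin m → EuclideanSpace ℝ (Fin dy)) × (Fin m → EuclideanSpace ℝ (Fin dq))) =>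
      (t.2.1 i, t.2.2 i)))
  obtain ⟨s, hs, ⟨y₀, q₀⟩, ⟨hy₀, hq₀⟩, hsad⟩ := Sion.exists_isSaddlePointOn
    (X := {s : Fin m → EuclideanSpace ℝ (Fin dy) | √(∑ i, ‖s i‖ ^ 2) ≤ R})
    (Y := (Set.univ.pi fun _ => Yb) ×ˢ Set.univ.pi Qc)
    (f := fun s t => ∑ i, g i (t.1 i) (t.2 i) + ∑ i, ⟪s i, ∑ j, W i j • t.1 j⟫)
    hBne hBconv hBcomp
    (fun t _ => (hLcont.comp
      (by fun_prop : Continuous fun s => (s, t))).lowerSemicontinuous.lowerSemicontinuousOn _)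
    (fun t _ => by
      refine ConvexOn.quasiconvexOn ⟨hBconv, fun u _ v _ a b _ _ hab => le_of_eq ?_⟩
      simp only [Pi.add_apply, Pi.smul_apply, inner_add_left, real_inner_smul_left,
        Finset.sum_add_distrib, ← Finset.mul_sum, smul_eq_mul]
      linear_combination (-∑ i, g i (t.1 i) (t.2 i)) * hab)
    ((convex_pi fun _ _ => hYb.2.1).prod (convex_pi fun i _ => (hQc i).2.1))
    ((Set.univ_pi_nonempty_iff.2 fun _ => hYb.1).prod
      (Set.univ_pi_nonempty_iff.2 fun i => (hQc i).1))
    ((isCompact_univ_pi fun _ => hYb.2.2).prod (isCompact_univ_pi fun i => (hQc i).2.2))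
    (fun s _ => (hLcont.comp
      (by fun_prop : Continuous fun t => (s, t))).upperSemicontinuous.upperSemicontinuousOn _)
    (fun s _ => by
      refine ConcaveOn.quasiconcaveOn
        ⟨(convex_pi fun _ _ => hYb.2.1).prod (convex_pi fun i _ => (hQc i).2.1),
          fun u hu v hv a b ha hb hab => ?_⟩
      have h1 : ∑ i, (a * g i (u.1 i) (u.2 i) + b * g i (v.1 i) (v.2 i)) ≤
          ∑ i, g i (a • u.1 i + b • v.1 i) (a • u.2 i + b • v.2 i) :=
        Finset.sum_le_sum fun i _ => (hconc i).2
          (x := (u.1 i, u.2 i)) ⟨hu.1 i trivial, hu.2 i trivial⟩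
          (y := (v.1 i, v.2 i)) ⟨hv.1 i trivial, hv.2 i trivial⟩ ha hb hab
      have h2 : ∑ i, ⟪s i, ∑ j, W i j • (a • u.1 j + b • v.1 j)⟫ =
          a * ∑ i, ⟪s i, ∑ j, W i j • u.1 j⟫ + b * ∑ i, ⟪s i, ∑ j, W i j • v.1 j⟫ := by
        rw [Finset.mul_sum, Finset.mul_sum, ← Finset.sum_add_distrib]
        refine Finset.sum_congr rfl fun i _ => ?_
        rw [← real_inner_smul_right, ← real_inner_smul_right, ← inner_add_right,
          Finset.smul_sum, Finset.smul_sum, ← Finset.sum_add_distrib]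
        refine congrArg _ (Finset.sum_congr rfl fun j _ => ?_)
        rw [smul_add, smul_comm (W i j) a, smul_comm (W i j) b]
      rw [Finset.sum_add_distrib, ← Finset.mul_sum, ← Finset.mul_sum] at h1
      simp only [Prod.fst_add, Prod.snd_add, Prod.smul_fst, Prod.smul_snd, Pi.add_apply,
        Pi.smul_apply, smul_eq_mul]
      rw [h2]
      linarith)
  have hy₀' : ∀ i, y₀ i ∈ Yb := fun i => hy₀ i trivial
  have hq₀' : ∀ i, q₀ i ∈ Qc i := fun i => hq₀ i trivial
  refine ⟨s, hs, _, mean_mem hm hYb.2.1 hy₀', q₀, hq₀', fun y q hy hq => ?_⟩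
  -- the multiplier anti-parallel to the constraint residual turns the dual term into the penalty
  obtain ⟨z, hz, hzw⟩ := exists_dual hR0 (fun i => ∑ j, W i j • y₀ j)
  have h1 := hsad (-z) (by simpa using hz) (y, q) ⟨fun i _ => hy i, fun i _ => hq i⟩
  have h2 := (abs_le.1 (exact_penalty hm hW hker hl hYb.2.1 (fun i y => g i y (q₀ i))
    (fun i => (hg i).comp (by fun_prop : Differentiable ℝ fun y => (y, q₀ i))) hM
    (fun i y hy => hgrad i y hy _ (hq₀' i)) ha hR0 hR y₀ hy₀')).2
  simp only [Pi.neg_apply, inner_neg_left, Finset.sum_neg_distrib, hzw] at h1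
  linarith

theorem stmt_1
    (m dx dp dy dq : ℕ) (hm : 0 < m)
    (Xb : Set (EuclideanSpace ℝ (Fin dx))) (Yb : Set (EuclideanSpace ℝ (Fin dy)))
    (Pc : Fin m → Set (EuclideanSpace ℝ (Fin dp)))
    (Qc : Fin m → Set (EuclideanSpace ℝ (Fin dq)))
    (hXb : Xb.Nonempty ∧ Convex ℝ Xb ∧ IsCompact Xb)
    (hYb : Yb.Nonempty ∧ Convex ℝ Yb ∧ IsCompact Yb)
    (hPc : ∀ i, (Pc i).Nonempty ∧ Convex ℝ (Pc i) ∧ IsCompact (Pc i))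
    (hQc : ∀ i, (Qc i).Nonempty ∧ Convex ℝ (Qc i) ∧ IsCompact (Qc i))
    (f : Fin m → EuclideanSpace ℝ (Fin dx) → EuclideanSpace ℝ (Fin dp) →
         EuclideanSpace ℝ (Fin dy) → EuclideanSpace ℝ (Fin dq) → ℝ)
    (hfdiff : ∀ i, Differentiable ℝ
      (fun t : (EuclideanSpace ℝ (Fin dx) × EuclideanSpace ℝ (Fin dp)) ×
          (EuclideanSpace ℝ (Fin dy) × EuclideanSpace ℝ (Fin dq)) =>
        f i t.1.1 t.1.2 t.2.1 t.2.2))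
    (hfconv : ∀ i, ∀ y ∈ Yb, ∀ q ∈ Qc i,
      ConvexOn ℝ (Xb ×ˢ Pc i)
        (fun t : EuclideanSpace ℝ (Fin dx) × EuclideanSpace ℝ (Fin dp) => f i t.1 t.2 y q))
    (hfconc : ∀ i, ∀ x ∈ Xb, ∀ p ∈ Pc i,
      ConcaveOn ℝ (Yb ×ˢ Qc i)
        (fun t : EuclideanSpace ℝ (Fin dy) × EuclideanSpace ℝ (Fin dq) => f i x p t.1 t.2))
    (Wx Wy : Matrix (Fin m) (Fin m) ℝ)
    (hWxpsd : Wx.PosSemidef) (hWypsd : Wy.PosSemidef)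
    (hWxker : ∀ v : Fin m → ℝ, Wx.mulVec v = 0 ↔ ∀ i j, v i = v j)
    (hWyker : ∀ v : Fin m → ℝ, Wy.mulVec v = 0 ↔ ∀ i j, v i = v j)
    (Mx My : ℝ) (hMx : 0 < Mx) (hMy : 0 < My)
    (hgradx : ∀ i, ∀ x ∈ Xb, ∀ p ∈ Pc i, ∀ y ∈ Yb, ∀ q ∈ Qc i,
      ‖gradient (fun x' => f i x' p y q) x‖ ≤ Mx)
    (hgrady : ∀ i, ∀ x ∈ Xb, ∀ p ∈ Pc i, ∀ y ∈ Yb, ∀ q ∈ Qc i,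
      ‖gradient (fun y' => f i x p y' q) y‖ ≤ My)
    (lx ly : ℝ)
    (hlx : IsLeast {μ : ℝ | 0 < μ ∧ ∃ v : Fin m → ℝ, v ≠ 0 ∧ Wx.mulVec v = μ • v} lx)
    (hly : IsLeast {μ : ℝ | 0 < μ ∧ ∃ v : Fin m → ℝ, v ≠ 0 ∧ Wy.mulVec v = μ • v} ly)
    (αb βb : ℝ) (hαb : 1 < αb) (hβb : 1 < βb)
    (RZ RS : ℝ) (hRZ0 : 0 ≤ RZ) (hRS0 : 0 ≤ RS)
    (hRZ : RZ ^ 2 = αb * m * Mx ^ 2 / lx ^ 2)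
    (hRS : RS ^ 2 = βb * m * My ^ 2 / ly ^ 2) :
    (⨅ xp : {t : (Fin m → EuclideanSpace ℝ (Fin dx)) ×
          (Fin m → EuclideanSpace ℝ (Fin dp)) //
        (∀ i, t.1 i ∈ Xb) ∧ (∀ i, t.2 i ∈ Pc i) ∧
          (fun i => ∑ j, Wx i j • t.1 j) = (0 : Fin m → EuclideanSpace ℝ (Fin dx))},
      ⨆ yq : {t : (Fin m → EuclideanSpace ℝ (Fin dy)) ×
          (Fin m → EuclideanSpace ℝ (Fin dq)) //
        (∀ i, t.1 i ∈ Yb) ∧ (∀ i, t.2 i ∈ Qc i) ∧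
          (fun i => ∑ j, Wy i j • t.1 j) = (0 : Fin m → EuclideanSpace ℝ (Fin dy))},
      ∑ i, f i (xp.1.1 i) (xp.1.2 i) (yq.1.1 i) (yq.1.2 i)) =
    (⨅ u : {t : (Fin m → EuclideanSpace ℝ (Fin dx)) ×
          (Fin m → EuclideanSpace ℝ (Fin dp)) × (Fin m → EuclideanSpace ℝ (Fin dy)) //
        (∀ i, t.1 i ∈ Xb) ∧ (∀ i, t.2.1 i ∈ Pc i) ∧
          Real.sqrt (∑ i, ‖t.2.2 i‖ ^ 2) ≤ RS},
      ⨆ v : {t : (Fin m → EuclideanSpace ℝ (Fin dy)) ×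
          (Fin m → EuclideanSpace ℝ (Fin dq)) × (Fin m → EuclideanSpace ℝ (Fin dx)) //
        (∀ i, t.1 i ∈ Yb) ∧ (∀ i, t.2.1 i ∈ Qc i) ∧
          Real.sqrt (∑ i, ‖t.2.2 i‖ ^ 2) ≤ RZ},
      (∑ i, f i (u.1.1 i) (u.1.2.1 i) (v.1.1 i) (v.1.2.1 i)) +
        (∑ i, ⟪v.1.2.2 i, ∑ j, Wx i j • u.1.1 j⟫) +
        (∑ i, ⟪u.1.2.2 i, ∑ j, Wy i j • v.1.1 j⟫)) := by
  obtain ⟨hBSne, -, hBScomp⟩ := ball_props (m := m) (d := dy) RS hRS0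
  obtain ⟨hBZne, -, hBZcomp⟩ := ball_props (m := m) (d := dx) RZ hRZ0
  set_option synthInstance.maxHeartbeats 200000 in
  have hfcont := fun i => (hfdiff i).continuous
  have hGcont : Continuous (fun t : ((Fin m → EuclideanSpace ℝ (Fin dx)) ×
        (Fin m → EuclideanSpace ℝ (Fin dp)) × (Fin m → EuclideanSpace ℝ (Fin dy))) ×
      ((Fin m → EuclideanSpace ℝ (Fin dy)) ×
        (Fin m → EuclideanSpace ℝ (Fin dq)) × (Fin m → EuclideanSpace ℝ (Fin dx))) =>
      (∑ i, f i (t.1.1 i) (t.1.2.1 i) (t.2.1 i) (t.2.2.1 i)) +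
        (∑ i, ⟪t.2.2.2 i, ∑ j, Wx i j • t.1.1 j⟫) +
        (∑ i, ⟪t.1.2.2 i, ∑ j, Wy i j • t.2.1 j⟫)) := by
    refine Continuous.add (Continuous.add (continuous_finsetSum _ fun i _ => ?_) (by fun_prop))
      (by fun_prop)
    exact (hfcont i).comp (by fun_prop : Continuous
      (fun t : ((Fin m → EuclideanSpace ℝ (Fin dx)) ×
        (Fin m → EuclideanSpace ℝ (Fin dp)) × (Fin m → EuclideanSpace ℝ (Fin dy))) ×
      ((Fin m → EuclideanSpace ℝ (Fin dy)) ×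
        (Fin m → EuclideanSpace ℝ (Fin dq)) × (Fin m → EuclideanSpace ℝ (Fin dx))) =>
      ((t.1.1 i, t.1.2.1 i), (t.2.1 i, t.2.2.1 i))))
  -- one uniform bound on the Lagrangian makes every supremum and infimum below genuine
  obtain ⟨C, hC⟩ := (((isCompact_univ_pi fun _ : Fin m => hXb.2.2).prod
      ((isCompact_univ_pi fun i => (hPc i).2.2).prod hBScomp)).prod
    ((isCompact_univ_pi fun _ : Fin m => hYb.2.2).prod
      ((isCompact_univ_pi fun i => (hQc i).2.2).prod hBZcomp))).exists_bound_of_continuousOn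
    hGcont.continuousOn
  have hbd : ∀ (x : Fin m → EuclideanSpace ℝ (Fin dx)) (p : Fin m → EuclideanSpace ℝ (Fin dp))
      (s y : Fin m → EuclideanSpace ℝ (Fin dy)) (q : Fin m → EuclideanSpace ℝ (Fin dq))
      (z : Fin m → EuclideanSpace ℝ (Fin dx)),
      (∀ i, x i ∈ Xb) → (∀ i, p i ∈ Pc i) → √(∑ i, ‖s i‖ ^ 2) ≤ RS →
      (∀ i, y i ∈ Yb) → (∀ i, q i ∈ Qc i) → √(∑ i, ‖z i‖ ^ 2) ≤ RZ →
      |(∑ i, f i (x i) (p i) (y i) (q i)) + (∑ i, ⟪z i, ∑ j, Wx i j • x j⟫) +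
        (∑ i, ⟪s i, ∑ j, Wy i j • y j⟫)| ≤ C := fun x p s y q z hx hp hs hy hq hz =>
    hC ((x, p, s), (y, q, z)) ⟨⟨fun i _ => hx i, fun i _ => hp i, hs⟩,
      ⟨fun i _ => hy i, fun i _ => hq i, hz⟩⟩
  have hbd0 : ∀ (x : Fin m → EuclideanSpace ℝ (Fin dx)) (p : Fin m → EuclideanSpace ℝ (Fin dp))
      (y : Fin m → EuclideanSpace ℝ (Fin dy)) (q : Fin m → EuclideanSpace ℝ (Fin dq)),
      (∀ i, x i ∈ Xb) → (∀ i, p i ∈ Pc i) →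
      (∀ i, y i ∈ Yb) → (∀ i, q i ∈ Qc i) →
      |∑ i, f i (x i) (p i) (y i) (q i)| ≤ C := fun x p y q hx hp hy hq => by
    simpa using hbd x p 0 y q 0 hx hp (by simpa using hRS0) hy hq (by simpa using hRZ0)
  obtain ⟨x₀, hx₀⟩ := hXb.1
  obtain ⟨y₀, hy₀⟩ := hYb.1
  choose p₀ hp₀ using fun i => (hPc i).1
  choose q₀ hq₀ using fun i => (hQc i).1
  have hWx0 := mul_sum_zero (d := dx) hWxker
  have hWy0 := mul_sum_zero (d := dy) hWyker
  refine le_antisymm ?_ ?_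
  · have : Nonempty {t : (Fin m → EuclideanSpace ℝ (Fin dx)) ×
          (Fin m → EuclideanSpace ℝ (Fin dp)) × (Fin m → EuclideanSpace ℝ (Fin dy)) //
        (∀ i, t.1 i ∈ Xb) ∧ (∀ i, t.2.1 i ∈ Pc i) ∧
          Real.sqrt (∑ i, ‖t.2.2 i‖ ^ 2) ≤ RS} :=
      ⟨⟨(fun _ => x₀, p₀, 0), fun _ => hx₀, hp₀, by simpa using hRS0⟩⟩
    refine le_ciInf ?_
    rintro ⟨⟨x, p, s⟩, hx, hp, hs⟩
    dsimp only at hx hp hs ⊢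
    have hc := mean_mem hm hXb.2.1 hx
    refine (ciInf_le ?_ ⟨(fun _ => ∑ j, (m : ℝ)⁻¹ • x j, p), fun _ => hc, hp, hWx0 _⟩).trans ?_
    · refine ⟨-C, ?_⟩
      rintro _ ⟨⟨⟨x', p'⟩, hx', hp', -⟩, rfl⟩
      refine (abs_le.1 (hbd0 x' p' (fun _ => y₀) q₀ hx' hp' (fun _ => hy₀) hq₀)).1.trans ?_
      refine le_ciSup (f := fun yq : {t : (Fin m → EuclideanSpace ℝ (Fin dy)) ×
          (Fin m → EuclideanSpace ℝ (Fin dq)) //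
        (∀ i, t.1 i ∈ Yb) ∧ (∀ i, t.2 i ∈ Qc i) ∧
          (fun i => ∑ j, Wy i j • t.1 j) = (0 : Fin m → EuclideanSpace ℝ (Fin dy))} =>
          ∑ i, f i (x' i) (p' i) (yq.1.1 i) (yq.1.2 i)) ?_
        ⟨(fun _ => y₀, q₀), fun _ => hy₀, hq₀, hWy0 _⟩
      refine ⟨C, ?_⟩
      rintro _ ⟨⟨⟨y, q⟩, hy, hq, -⟩, rfl⟩
      exact (abs_le.1 (hbd0 x' p' y q hx' hp' hy hq)).2
    · have : Nonempty {t : (Fin m → EuclideanSpace ℝ (Fin dy)) ×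
          (Fin m → EuclideanSpace ℝ (Fin dq)) //
        (∀ i, t.1 i ∈ Yb) ∧ (∀ i, t.2 i ∈ Qc i) ∧
          (fun i => ∑ j, Wy i j • t.1 j) = (0 : Fin m → EuclideanSpace ℝ (Fin dy))} :=
        ⟨⟨(fun _ => y₀, q₀), fun _ => hy₀, hq₀, hWy0 _⟩⟩
      refine ciSup_le ?_
      rintro ⟨⟨y, q⟩, hy, hq, hWy⟩
      dsimp only at hy hq hWy ⊢
      -- the multiplier parallel to the residual of `x` pays for averaging `x`
      obtain ⟨z, hz, hzw⟩ := exists_dual hRZ0 (fun i => ∑ j, Wx i j • x j)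
      refine le_trans ?_ (le_ciSup ?_ ⟨(y, q, z), hy, hq, hz⟩)
      · have h := (abs_le.1 (exact_penalty hm hWxpsd hWxker hlx hXb.2.1
          (fun i x' => f i x' (p i) (y i) (q i))
          (fun i => (hfdiff i).comp
            (by fun_prop : Differentiable ℝ fun x' => ((x', p i), (y i, q i)))) hMx
          (fun i x' hx' => hgradx i x' hx' _ (hp i) _ (hy i) _ (hq i)) hαb hRZ0 hRZ x hx)).1
        have hs0 : ∑ i, ⟪s i, ∑ j, Wy i j • y j⟫ = 0 :=
          Finset.sum_eq_zero fun i _ => by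
            rw [show ∑ j, Wy i j • y j = 0 from congrFun hWy i, inner_zero_right]
        dsimp only at hzw ⊢
        rw [hzw, hs0]
        linarith
      · refine ⟨C, ?_⟩
        rintro _ ⟨⟨⟨y', q', z'⟩, hy', hq', hz'⟩, rfl⟩
        exact (abs_le.1 (hbd x p s y' q' z' hx hp hs hy' hq' hz')).2
  · have : Nonempty {t : (Fin m → EuclideanSpace ℝ (Fin dx)) ×
          (Fin m → EuclideanSpace ℝ (Fin dp)) //
        (∀ i, t.1 i ∈ Xb) ∧ (∀ i, t.2 i ∈ Pc i) ∧
          (fun i => ∑ j, Wx i j • t.1 j) = (0 : Fin m → EuclideanSpace ℝ (Fin dx))} :=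
      ⟨⟨(fun _ => x₀, p₀), fun _ => hx₀, hp₀, hWx0 _⟩⟩
    refine le_ciInf ?_
    rintro ⟨⟨x, p⟩, hx, hp, hWx⟩
    dsimp only at hx hp hWx ⊢
    obtain ⟨s, hs, c, hc, q₁, hq₁, hmult⟩ := exists_multiplier hm hWypsd hWyker hly hYb hQc
      (fun i y q => f i (x i) (p i) y q)
      (fun i => (hfdiff i).comp (by fun_prop : Differentiable ℝ
        fun t : EuclideanSpace ℝ (Fin dy) × EuclideanSpace ℝ (Fin dq) => ((x i, p i), t)))
      (fun i => hfconc i _ (hx i) _ (hp i)) hMy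
      (fun i y hy q hq => hgrady i _ (hx i) _ (hp i) y hy q hq) hβb hRS0 hRS
    refine (ciInf_le ?_ ⟨(x, p, s), hx, hp, hs⟩).trans ?_
    · refine ⟨-C, ?_⟩
      rintro _ ⟨⟨⟨x', p', s'⟩, hx', hp', hs'⟩, rfl⟩
      refine (abs_le.1 (hbd x' p' s' (fun _ => y₀) q₀ 0 hx' hp' hs' (fun _ => hy₀) hq₀
        (by simpa using hRZ0))).1.trans ?_
      refine le_ciSup (f := fun v : {t : (Fin m → EuclideanSpace ℝ (Fin dy)) ×
          (Fin m → EuclideanSpace ℝ (Fin dq)) × (Fin m → EuclideanSpace ℝ (Fin dx)) //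
        (∀ i, t.1 i ∈ Yb) ∧ (∀ i, t.2.1 i ∈ Qc i) ∧
          Real.sqrt (∑ i, ‖t.2.2 i‖ ^ 2) ≤ RZ} =>
        (∑ i, f i (x' i) (p' i) (v.1.1 i) (v.1.2.1 i)) +
        (∑ i, ⟪v.1.2.2 i, ∑ j, Wx i j • x' j⟫) +
        (∑ i, ⟪s' i, ∑ j, Wy i j • v.1.1 j⟫)) ?_
        ⟨(fun _ => y₀, q₀, 0), fun _ => hy₀, hq₀, by simpa using hRZ0⟩
      refine ⟨C, ?_⟩
      rintro _ ⟨⟨⟨y', q', z'⟩, hy', hq', hz'⟩, rfl⟩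
      exact (abs_le.1 (hbd x' p' s' y' q' z' hx' hp' hs' hy' hq' hz')).2
    · have : Nonempty {t : (Fin m → EuclideanSpace ℝ (Fin dy)) ×
          (Fin m → EuclideanSpace ℝ (Fin dq)) × (Fin m → EuclideanSpace ℝ (Fin dx)) //
        (∀ i, t.1 i ∈ Yb) ∧ (∀ i, t.2.1 i ∈ Qc i) ∧
          Real.sqrt (∑ i, ‖t.2.2 i‖ ^ 2) ≤ RZ} :=
        ⟨⟨(fun _ => y₀, q₀, 0), fun _ => hy₀, hq₀, by simpa using hRZ0⟩⟩
      refine ciSup_le ?_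
      rintro ⟨⟨y, q, z⟩, hy, hq, hz⟩
      dsimp only at hy hq hz ⊢
      have hz0 : ∑ i, ⟪z i, ∑ j, Wx i j • x j⟫ = 0 :=
        Finset.sum_eq_zero fun i _ => by
          rw [show ∑ j, Wx i j • x j = 0 from congrFun hWx i, inner_zero_right]
      rw [hz0, add_zero]
      refine (hmult y q hy hq).trans (le_ciSup (f := fun yq : {t :
          (Fin m → EuclideanSpace ℝ (Fin dy)) × (Fin m → EuclideanSpace ℝ (Fin dq)) //
        (∀ i, t.1 i ∈ Yb) ∧ (∀ i, t.2 i ∈ Qc i) ∧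
          (fun i => ∑ j, Wy i j • t.1 j) = (0 : Fin m → EuclideanSpace ℝ (Fin dy))} =>
          ∑ i, f i (x i) (p i) (yq.1.1 i) (yq.1.2 i)) ?_
        ⟨(fun _ => c, q₁), fun _ => hc, hq₁, hWy0 _⟩)
      refine ⟨C, ?_⟩
      rintro _ ⟨⟨⟨y', q'⟩, hy', hq', -⟩, rfl⟩
      exact (abs_le.1 (hbd0 x p y' q' hx hp hy' hq')).2
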